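/- Let κ ≥ 0 and let ρ₊(η,κ) (for η ≥ −κ²) and ρ₋(η,κ) (for η ≤ −κ²) denote the unique solutions in [1,∞) of η − G(ρ) + κ²P₋(ρ) = 0 and η + G(ρ) + κ²P₊(ρ) = 0 respectively. Then the following bounds hold: (i) for η ≥ −κ²: (1/4)(κ + η) ≤ ρ₊(η,κ) ≤ 1 + κ² + η; moreover if −κ² ≤ η ≤ 0 then ρ₊(η,κ)·|η| ≤ κ² and 1 ≤ ρ₊(η,κ) ≤ 1 + κ; (ii) for η ≤ −κ²: (1/4)·|η|/(1+κ²) ≤ ρ₋(η,κ) ≤ (1 + |η|)/(1 + κ²). -/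

import Mathlib

/-!
Each implicit relation expresses `η` through `y` and `κ`, so every bound follows from elementary
bounds on `G` and `P_±`: one has `P₊ P₋ = 1` with `P₋ ≤ 1` and `y ≤ P₊ ≤ 4y`, while
`0 ≤ log (√y + √(y - 1)) ≤ y` and `y - 1 ≤ √(y (y - 1)) ≤ y - 1/2` give `y - 1 ≤ G ≤ 2y`.
The two less direct bounds use `P₊ P₋ = 1`. The arithmetic-geometric mean inequality
`κ ≤ κ² P₋ + P₊ / 4` bounds `ρ₊` from below. In the region `η ≤ 0`, multiplying
`y - 1 ≤ G ≤ κ² P₋` by `y - 1` gives `(y - 1)² ≤ κ²`, because `y P₋ ≤ P₊ P₋ = 1`.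
-/

noncomputable section

/-- `G(y) = √(y(y−1)) + ln(√y + √(y−1))`. -/
def Gf (y : ℝ) : ℝ := Real.sqrt (y * (y - 1)) + Real.log (Real.sqrt y + Real.sqrt (y - 1))

/-- `P₊(y) = 2y − 1 + 2√(y(y−1))`. -/
def Pp (y : ℝ) : ℝ := 2 * y - 1 + 2 * Real.sqrt (y * (y - 1))

/-- `P₋(y) = 2y − 1 − 2√(y(y−1))`. -/
def Pm (y : ℝ) : ℝ := 2 * y - 1 - 2 * Real.sqrt (y * (y - 1))

lemma sub_one_le_sqrt_mul_sub_one (y : ℝ) : y - 1 ≤ √(y * (y - 1)) := by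
  rcases le_total y 1 with hy | hy
  · exact (sub_nonpos.mpr hy).trans (Real.sqrt_nonneg _)
  · exact Real.le_sqrt_of_sq_le (by nlinarith)

lemma sqrt_mul_sub_one_le_sub_half {y : ℝ} (hy : 1 / 2 ≤ y) : √(y * (y - 1)) ≤ y - 1 / 2 :=
  Real.sqrt_le_iff.mpr ⟨by linarith, by nlinarith⟩

lemma log_sqrt_add_sqrt_sub_one_nonneg {y : ℝ} (hy : 1 ≤ y) : 0 ≤ Real.log (√y + √(y - 1)) :=
  Real.log_nonneg (le_add_of_le_of_nonneg (Real.one_le_sqrt.mpr hy) (Real.sqrt_nonneg _))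

lemma log_sqrt_add_sqrt_sub_one_le_self {y : ℝ} (hy : 0 < y) :
    Real.log (√y + √(y - 1)) ≤ y := by
  have hpos : 0 < √y + √(y - 1) :=
    add_pos_of_pos_of_nonneg (Real.sqrt_pos.mpr hy) (Real.sqrt_nonneg _)
  have hmono : √(y - 1) ≤ √y := Real.sqrt_le_sqrt (by linarith)
  calc Real.log (√y + √(y - 1)) ≤ √y + √(y - 1) - 1 := Real.log_le_sub_one_of_pos hpos
    _ ≤ 2 * √y - 1 := by linarith
    _ ≤ √y ^ 2 := by linarith [sq_nonneg (√y - 1)]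
    _ = y := Real.sq_sqrt hy.le

lemma sub_one_le_Gf {y : ℝ} (hy : 1 ≤ y) : y - 1 ≤ Gf y :=
  le_add_of_le_of_nonneg (sub_one_le_sqrt_mul_sub_one y) (log_sqrt_add_sqrt_sub_one_nonneg hy)

lemma Gf_le_two_mul {y : ℝ} (hy : 1 / 2 ≤ y) : Gf y ≤ 2 * y := by
  rw [Gf]
  have hlog : Real.log (√y + √(y - 1)) ≤ y := log_sqrt_add_sqrt_sub_one_le_self (by linarith)
  linarith [sqrt_mul_sub_one_le_sub_half hy]

lemma self_le_Pp {y : ℝ} (hy : 1 ≤ y) : y ≤ Pp y := by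
  rw [Pp]
  linarith [Real.sqrt_nonneg (y * (y - 1))]

lemma Pp_le_four_mul {y : ℝ} (hy : 1 / 2 ≤ y) : Pp y ≤ 4 * y := by
  rw [Pp]
  linarith [sqrt_mul_sub_one_le_sub_half hy]

lemma Pm_nonneg {y : ℝ} (hy : 1 / 2 ≤ y) : 0 ≤ Pm y := by
  rw [Pm]
  linarith [sqrt_mul_sub_one_le_sub_half hy]

lemma Pm_le_one (y : ℝ) : Pm y ≤ 1 := by
  rw [Pm]
  linarith [sub_one_le_sqrt_mul_sub_one y]

lemma Pp_mul_Pm {y : ℝ} (hy : 1 ≤ y) : Pp y * Pm y = 1 := by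
  have hsq : √(y * (y - 1)) ^ 2 = y * (y - 1) :=
    Real.sq_sqrt (mul_nonneg (by linarith) (by linarith))
  rw [Pp, Pm]
  linear_combination -4 * hsq

lemma self_mul_Pm_le_one {y : ℝ} (hy : 1 ≤ y) : y * Pm y ≤ 1 :=
  (mul_le_mul_of_nonneg_right (self_le_Pp hy) (Pm_nonneg (by linarith))).trans_eq (Pp_mul_Pm hy)

lemma le_sq_mul_Pm_add_Pp_div_four {y : ℝ} (hy : 1 ≤ y) (κ : ℝ) :
    κ ≤ κ ^ 2 * Pm y + Pp y / 4 := by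
  have hsquare : κ ^ 2 * Pm y + Pp y / 4 - κ = Pm y * (κ - Pp y / 2) ^ 2 := by
    linear_combination (κ - Pp y / 4) * Pp_mul_Pm hy
  rw [← sub_nonneg, hsquare]
  exact mul_nonneg (Pm_nonneg (by linarith)) (sq_nonneg _)

/-- `y` is a value `ρ₊(η, κ)`: a solution in `[1, ∞)` of the implicit relation with `ι = +1`.
The relation itself forces `-κ² ≤ η`, so the range of `η` is not a field. -/
structure IsRhoPlus (κ η y : ℝ) : Prop where
  one_le : 1 ≤ y
  relation : η - Gf y + κ ^ 2 * Pm y = 0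

namespace IsRhoPlus

variable {κ η y : ℝ}

lemma add_div_four_le (h : IsRhoPlus κ η y) : (κ + η) / 4 ≤ y := by
  have hy := h.one_le
  have hG : Gf y ≤ 2 * y := Gf_le_two_mul (by linarith)
  have hP : Pp y ≤ 4 * y := Pp_le_four_mul (by linarith)
  linarith [h.relation, le_sq_mul_Pm_add_Pp_div_four hy κ]

lemma le_one_add_sq_add (h : IsRhoPlus κ η y) : y ≤ 1 + κ ^ 2 + η := by
  have hP : κ ^ 2 * Pm y ≤ κ ^ 2 := mul_le_of_le_one_right (sq_nonneg κ) (Pm_le_one y)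
  linarith [h.relation, sub_one_le_Gf h.one_le]

lemma mul_abs_le_sq (h : IsRhoPlus κ η y) (hη : η ≤ 0) : y * |η| ≤ κ ^ 2 := by
  have hy : 0 ≤ y := zero_le_one.trans h.one_le
  have habs : |η| ≤ κ ^ 2 * Pm y := by
    rw [abs_of_nonpos hη]
    linarith [h.relation, sub_one_le_Gf h.one_le, h.one_le]
  calc y * |η| ≤ y * (κ ^ 2 * Pm y) := mul_le_mul_of_nonneg_left habs hy
    _ = κ ^ 2 * (y * Pm y) := mul_left_comm ..
    _ ≤ κ ^ 2 := mul_le_of_le_one_right (sq_nonneg κ) (self_mul_Pm_le_one h.one_le)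

lemma le_one_add (h : IsRhoPlus κ η y) (hκ : 0 ≤ κ) (hη : η ≤ 0) : y ≤ 1 + κ := by
  have hy : 0 ≤ y - 1 := sub_nonneg.mpr h.one_le
  have hP : 0 ≤ Pm y := Pm_nonneg (by linarith)
  have hle : y - 1 ≤ κ ^ 2 * Pm y := by linarith [h.relation, sub_one_le_Gf h.one_le]
  have hyP : (y - 1) * Pm y ≤ 1 := by linarith [self_mul_Pm_le_one h.one_le]
  have hsq : (y - 1) ^ 2 ≤ κ ^ 2 :=
    calc (y - 1) ^ 2 = (y - 1) * (y - 1) := sq _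
      _ ≤ (y - 1) * (κ ^ 2 * Pm y) := mul_le_mul_of_nonneg_left hle hy
      _ = κ ^ 2 * ((y - 1) * Pm y) := mul_left_comm ..
      _ ≤ κ ^ 2 := mul_le_of_le_one_right (sq_nonneg κ) hyP
  linarith [(sq_le_sq₀ hy hκ).mp hsq]

end IsRhoPlus

/-- `y` is a value `ρ₋(η, κ)`: a solution in `[1, ∞)` of the implicit relation with `ι = -1`.
The relation itself forces `η ≤ -κ²`, so the range of `η` is not a field. -/
structure IsRhoMinus (κ η y : ℝ) : Prop where
  one_le : 1 ≤ y
  relation : η + Gf y + κ ^ 2 * Pp y = 0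

namespace IsRhoMinus

variable {κ η y : ℝ}

lemma abs_eq (h : IsRhoMinus κ η y) : |η| = Gf y + κ ^ 2 * Pp y := by
  have hy := h.one_le
  have hG : 0 ≤ Gf y := (sub_nonneg.mpr hy).trans (sub_one_le_Gf hy)
  have hP : 0 ≤ κ ^ 2 * Pp y := mul_nonneg (sq_nonneg κ) (by linarith [self_le_Pp hy])
  rw [abs_of_nonpos (by linarith [h.relation])]
  linear_combination -h.relation

lemma abs_div_div_four_le (h : IsRhoMinus κ η y) : |η| / (1 + κ ^ 2) / 4 ≤ y := by
  have hy := h.one_le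
  have hG : Gf y ≤ 2 * y := Gf_le_two_mul (by linarith)
  have hP : κ ^ 2 * Pp y ≤ κ ^ 2 * (4 * y) :=
    mul_le_mul_of_nonneg_left (Pp_le_four_mul (by linarith)) (sq_nonneg κ)
  rw [div_div, div_le_iff₀ (by positivity), h.abs_eq]
  linarith

lemma le_one_add_abs_div (h : IsRhoMinus κ η y) : y ≤ (1 + |η|) / (1 + κ ^ 2) := by
  have hG : y - 1 ≤ Gf y := sub_one_le_Gf h.one_le
  have hP : κ ^ 2 * y ≤ κ ^ 2 * Pp y :=
    mul_le_mul_of_nonneg_left (self_le_Pp h.one_le) (sq_nonneg κ)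
  rw [le_div_iff₀ (by positivity), h.abs_eq]
  linarith

end IsRhoMinus

/-- Bounds for the solutions `ρ₊(η,κ)` of `η − G(ρ) + κ²P₋(ρ) = 0` (for `η ≥ −κ²`) and
`ρ₋(η,κ)` of `η + G(ρ) + κ²P₊(ρ) = 0` (for `η ≤ −κ²`) in `[1,∞)`:
(i) `(1/4)(κ + η) ≤ ρ₊ ≤ 1 + κ² + η`, and if moreover `−κ² ≤ η ≤ 0` then `ρ₊·|η| ≤ κ²`
and `1 ≤ ρ₊ ≤ 1 + κ`; (ii) `(1/4)·|η|/(1+κ²) ≤ ρ₋ ≤ (1 + |η|)/(1 + κ²)`. -/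
theorem rho_bounds (κ η y : ℝ) (hκ : 0 ≤ κ) :
    ((-κ ^ 2 ≤ η ∧ 1 ≤ y ∧ η - Gf y + κ ^ 2 * Pm y = 0) →
      ((κ + η) / 4 ≤ y ∧ y ≤ 1 + κ ^ 2 + η ∧
        (η ≤ 0 → y * |η| ≤ κ ^ 2 ∧ 1 ≤ y ∧ y ≤ 1 + κ))) ∧
    ((η ≤ -κ ^ 2 ∧ 1 ≤ y ∧ η + Gf y + κ ^ 2 * Pp y = 0) →
      (|η| / (1 + κ ^ 2) / 4 ≤ y ∧ y ≤ (1 + |η|) / (1 + κ ^ 2))) := by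
  constructor
  · rintro ⟨-, hy, hrel⟩
    have hρ : IsRhoPlus κ η y := ⟨hy, hrel⟩
    exact ⟨hρ.add_div_four_le, hρ.le_one_add_sq_add,
      fun hη => ⟨hρ.mul_abs_le_sq hη, hy, hρ.le_one_add hκ hη⟩⟩
  · rintro ⟨-, hy, hrel⟩
    have hρ : IsRhoMinus κ η y := ⟨hy, hrel⟩
    exact ⟨hρ.abs_div_div_four_le, hρ.le_one_add_abs_div⟩
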